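/- arXiv:1603.01375 — 2 statements merged into one kernel-verified Lean document; each statement's English description precedes it below -/
import Mathlib

section
/- Let Y be a Banach space, let 𝒜 : Y → [0,∞] be lower semicontinuous with relatively compact sublevel sets in Y, and let 𝒲 : Y × Y → [0,∞] be lower semicontinuous and such that 𝒲(u,ũ) = 0 for u, ũ with 𝒜(u) < ∞ and 𝒜(ũ) < ∞ implies u = ũ. Let (U_k)_{k∈ℕ} be a sequence of measurable functions U_k : (0,T) → Y such that sup_{k∈ℕ} ∫₀^T 𝒜(U_k(t)) dt < ∞ and lim_{h→0⁺} sup_{k∈ℕ} ∫₀^{T−h} 𝒲(U_k(t+h), U_k(t)) dt = 0. Then there exists a subsequence of (U_k) that converges in measure with respect to t ∈ (0,T) to a limit function U : (0,T) → Y. -/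
open MeasureTheory Set Filter Topology
open scoped ENNReal

/-! By Markov's inequality the bound on the integrals of `A (U k t)` makes the family tight. On a
compact sublevel of `A`, `W` is bounded below away from the diagonal, so smallness of the integral
of `W (U k (t + h), U k t)` forces the translates of `U k` to be close to `U k` in measure,
uniformly in `k`. Averaging over the offset of a grid then approximates every `U k`, up to a set of
small measure, by its values at finitely many grid points, and these lie in a fixed compact set.
Along an ultrafilter the sampled values are Cauchy, so the sequence is Cauchy in measure and has a
subsequence that is Cauchy almost everywhere. Its limit exists in `Y` even when `Y` is incomplete:
by Fatou's lemma almost every `U (φ n) t` returns infinitely often to one compact sublevel. -/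

/-! ### Sequences that are Cauchy in measure -/

/-- The family `f` is Cauchy in measure along the filter `l`: the Cauchy counterpart of
`MeasureTheory.TendstoInMeasure`. -/
def CauchyInMeasure {α E ι : Type*} [EDist E] {_ : MeasurableSpace α} (μ : Measure α)
    (f : ι → α → E) (l : Filter ι) : Prop :=
  ∀ ε : ℝ≥0∞, 0 < ε →
    Tendsto (fun p : ι × ι => μ {x | ε ≤ edist (f p.1 x) (f p.2 x)}) (l ×ˢ l) (𝓝 0)

theorem CauchyInMeasure.exists_subseq_measure_le {α E : Type*} [EDist E] {_ : MeasurableSpace α}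
    {μ : Measure α} {f : ℕ → α → E} {l : Filter ℕ} [l.NeBot] (hf : CauchyInMeasure μ f l)
    (hl : l ≤ atTop) {d : ℕ → ℝ≥0∞} (hd : ∀ n, 0 < d n) :
    ∃ φ : ℕ → ℕ, StrictMono φ ∧
      ∀ n, μ {x | d n ≤ edist (f (φ n) x) (f (φ (n + 1)) x)} ≤ d n := by
  have hsmall : ∀ n, ∃ S ∈ l, ∀ j ∈ S, ∀ k ∈ S, μ {x | d n ≤ edist (f j x) (f k x)} ≤ d n := by
    intro n
    obtain ⟨S, hS, hSd⟩ := mem_prod_self_iff.1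
      ((hf (d n) (hd n)).eventually (Iic_mem_nhds (hd n)))
    exact ⟨S, hS, fun j hj k hk => hSd (mk_mem_prod hj hk)⟩
  choose S hSl hS using hsmall
  have hfreq : ∀ n, ∃ᶠ k in atTop, ∀ i ≤ n, k ∈ S i := fun n =>
    (((finite_Iic n).eventually_all (p := fun i k => k ∈ S i)).2
      fun i _ => hSl i).frequently.filter_mono hl
  obtain ⟨φ, hφ, hφS⟩ := extraction_forall_of_frequently hfreq
  exact ⟨φ, hφ, fun n => hS n _ (hφS n n le_rfl) _ (hφS (n + 1) n n.le_succ)⟩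

theorem ae_cauchySeq_of_tsum_measure_ne_top {α E : Type*} [PseudoEMetricSpace E]
    {_ : MeasurableSpace α} {μ : Measure α} {f : ℕ → α → E} {d : ℕ → ℝ≥0∞} (hd : ∑' n, d n ≠ ⊤)
    (hf : ∑' n, μ {x | d n ≤ edist (f n x) (f (n + 1) x)} ≠ ⊤) :
    ∀ᵐ x ∂μ, CauchySeq fun n => f n x := by
  filter_upwards [ae_eventually_notMem hf] with x hx
  obtain ⟨N, hN⟩ := eventually_atTop.1 hx
  refine (cauchySeq_shift N).1 (cauchySeq_of_edist_le_of_tsum_ne_top (fun n => d (n + N))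
    (fun n => ?_) (ne_top_of_le_ne_top hd
      (ENNReal.tsum_comp_le_tsum_of_injective (add_left_injective N) d)))
  rw [Nat.succ_add]
  exact (not_le.1 (hN (n + N) (Nat.le_add_left N n))).le

theorem CauchyInMeasure.exists_subseq_ae_cauchySeq {α E : Type*} [PseudoEMetricSpace E]
    {_ : MeasurableSpace α} {μ : Measure α} {f : ℕ → α → E} {l : Filter ℕ} [l.NeBot]
    (hf : CauchyInMeasure μ f l) (hl : l ≤ atTop) :
    ∃ φ : ℕ → ℕ, StrictMono φ ∧ ∀ᵐ x ∂μ, CauchySeq fun n => f (φ n) x := by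
  have hd : ∑' n : ℕ, (2⁻¹ : ℝ≥0∞) ^ n ≠ ⊤ := by
    rw [ENNReal.tsum_geometric, ENNReal.one_sub_inv_two, inv_inv]
    exact ENNReal.ofNat_ne_top
  obtain ⟨φ, hφ, hφd⟩ := hf.exists_subseq_measure_le hl (d := fun n => 2⁻¹ ^ n)
    fun n => ENNReal.pow_pos (by simp) n
  exact ⟨φ, hφ, ae_cauchySeq_of_tsum_measure_ne_top hd
    (ne_top_of_le_ne_top hd (ENNReal.tsum_le_tsum hφd))⟩

/-! ### Functionals with relatively compact sublevels -/

/-- Every sublevel of `A` at a finite height is relatively compact: the coercivity asked of the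
functional in the Aubin–Lions lemma. -/
def HasRelativelyCompactSublevels {Y : Type*} [TopologicalSpace Y] (A : Y → ℝ≥0∞) : Prop :=
  ∀ c : ℝ≥0∞, c ≠ ⊤ → IsCompact (closure {y | A y ≤ c})

theorem aemeasurable_comp_of_lowerSemicontinuous {α Z : Type*} [TopologicalSpace Z]
    [TopologicalSpace.PseudoMetrizableSpace Z] {_ : MeasurableSpace α} {μ : Measure α}
    {g : Z → ℝ≥0∞} (hg : LowerSemicontinuous g) {f : α → Z} (hf : AEStronglyMeasurable f μ) :
    AEMeasurable (fun x => g (f x)) μ := by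
  borelize Z
  exact hg.measurable.comp_aemeasurable hf.aemeasurable

theorem aemeasurable_liminf {α : Type*} {_ : MeasurableSpace α} {μ : Measure α}
    {f : ℕ → α → ℝ≥0∞} (hf : ∀ n, AEMeasurable (f n) μ) :
    AEMeasurable (fun x => liminf (fun n => f n x) atTop) μ := by
  refine ⟨_, .liminf fun n => (hf n).measurable_mk, ?_⟩
  filter_upwards [ae_all_iff.2 fun n => (hf n).ae_eq_mk] with x hx
  exact congrArg (liminf · atTop) (funext hx)

theorem exists_forall_measure_lt_le_of_iSup_lintegral {α ι : Type*} {_ : MeasurableSpace α}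
    {μ : Measure α} {f : ι → α → ℝ≥0∞} (hf : ∀ k, AEMeasurable (f k) μ)
    (hbdd : ⨆ k, ∫⁻ x, f k x ∂μ < ⊤) {η : ℝ≥0∞} (hη : 0 < η) :
    ∃ M : ℝ≥0∞, M ≠ ⊤ ∧ ∀ k, μ {x | M < f k x} ≤ η := by
  set C := ⨆ k, ∫⁻ x, f k x ∂μ
  rcases eq_or_ne η ⊤ with rfl | hη_top
  · exact ⟨0, ENNReal.zero_ne_top, fun _ => le_top⟩
  set M : ℝ≥0∞ := (C + 1) / η with hM
  have hM_pos : M ≠ 0 := (ENNReal.div_pos (by simp) hη_top).ne'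
  have hM_top : M ≠ ⊤ := ENNReal.div_ne_top (by simp [hbdd.ne]) hη.ne'
  refine ⟨M, hM_top, fun k => ?_⟩
  calc μ {x | M < f k x} ≤ μ {x | M ≤ f k x} := measure_mono fun x (hx : M < f k x) => hx.le
    _ ≤ (∫⁻ x, f k x ∂μ) / M := meas_ge_le_lintegral_div (hf k) hM_pos hM_top
    _ ≤ η := ENNReal.div_le_of_le_mul <| by
      rw [hM, ENNReal.mul_div_cancel hη.ne' hη_top]
      exact (le_iSup (fun k => ∫⁻ x, f k x ∂μ) k).trans le_self_add

theorem exists_pos_forall_le_of_lowerSemicontinuousOn {X : Type*} [TopologicalSpace X] {S : Set X}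
    (hS : IsCompact S) {g : X → ℝ≥0∞} (hg : LowerSemicontinuousOn g S) (hpos : ∀ x ∈ S, g x ≠ 0) :
    ∃ δ : ℝ≥0∞, δ ≠ 0 ∧ δ ≠ ⊤ ∧ ∀ x ∈ S, δ ≤ g x := by
  rcases S.eq_empty_or_nonempty with rfl | hne
  · exact ⟨1, one_ne_zero, ENNReal.one_ne_top, by simp⟩
  obtain ⟨x, hx, hmin⟩ := hg.exists_isMinOn hne hS
  refine ⟨min (g x) 1, by simp [min_eq_iff, hpos x hx],
    ne_top_of_le_ne_top ENNReal.one_ne_top (min_le_right _ _),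
    fun y hy => (min_le_left _ _).trans (hmin hy)⟩

theorem exists_pos_forall_le_of_le_edist {Y : Type*} [PseudoEMetricSpace Y] {A : Y → ℝ≥0∞}
    (hA : LowerSemicontinuous A)
    (hA_cpt : HasRelativelyCompactSublevels A) {W : Y × Y → ℝ≥0∞}
    (hW : LowerSemicontinuous W)
    (hW_sep : ∀ u v, A u ≠ ⊤ → A v ≠ ⊤ → W (u, v) = 0 → edist u v = 0) {M ε : ℝ≥0∞}
    (hM : M ≠ ⊤) (hε : 0 < ε) :
    ∃ δ : ℝ≥0∞, δ ≠ 0 ∧ δ ≠ ⊤ ∧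
      ∀ u v, A u ≤ M → A v ≤ M → ε ≤ edist u v → δ ≤ W (u, v) := by
  have hK : IsCompact {y | A y ≤ M} :=
    (hA_cpt M hM).of_isClosed_subset (hA.isClosed_preimage M) subset_closure
  have hS : IsCompact ({y | A y ≤ M} ×ˢ {y | A y ≤ M} ∩ {p | ε ≤ edist p.1 p.2}) :=
    (hK.prod hK).inter_right (isClosed_le continuous_const (by fun_prop))
  obtain ⟨δ, hδ, hδ_top, hδW⟩ := exists_pos_forall_le_of_lowerSemicontinuousOn hS
    (hW.lowerSemicontinuousOn _) fun p hp hWp =>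
      hε.not_ge (hp.2.trans_eq (hW_sep p.1 p.2 (ne_top_of_le_ne_top hM hp.1.1)
        (ne_top_of_le_ne_top hM hp.1.2) hWp))
  exact ⟨δ, hδ, hδ_top, fun u v hu hv huv => hδW (u, v) ⟨⟨hu, hv⟩, huv⟩⟩

section RelativelyCompactSublevels

variable {α Y : Type*} {_ : MeasurableSpace α} {μ : Measure α} [MeasurableSpace Y]
  {A : Y → ℝ≥0∞}

theorem isTightMeasureSet_range_map_of_iSup_lintegral {ι : Type*} [TopologicalSpace Y]
    (hA : Measurable A) (hA_cpt : HasRelativelyCompactSublevels A) {f : ι → α → Y}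
    (hf : ∀ k, AEMeasurable (f k) μ) (hbdd : ⨆ k, ∫⁻ x, A (f k x) ∂μ < ⊤) :
    IsTightMeasureSet (range fun k => μ.map (f k)) := by
  refine isTightMeasureSet_iff_exists_isCompact_measure_compl_le.2 fun η hη => ?_
  obtain ⟨M, hM_top, hM⟩ := exists_forall_measure_lt_le_of_iSup_lintegral
    (fun k => hA.comp_aemeasurable (hf k)) hbdd hη
  refine ⟨_, hA_cpt M hM_top, forall_mem_range.2 fun k => ?_⟩
  calc μ.map (f k) (closure {y | A y ≤ M})ᶜ ≤ μ.map (f k) {y | M < A y} :=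
        measure_mono fun y (hy : y ∉ closure {y | A y ≤ M}) =>
          show M < A y from not_le.1 fun hle => hy (subset_closure hle)
    _ = μ {x | M < A (f k x)} :=
        Measure.map_apply_of_aemeasurable (hf k) (measurableSet_lt measurable_const hA)
    _ ≤ η := hM k

theorem aestronglyMeasurable_of_lintegral_ne_top [TopologicalSpace Y]
    [TopologicalSpace.PseudoMetrizableSpace Y] [BorelSpace Y] (hA : Measurable A)
    (hA_cpt : HasRelativelyCompactSublevels A) {u : α → Y}
    (hu : AEMeasurable u μ) (huA : ∫⁻ x, A (u x) ∂μ ≠ ⊤) : AEStronglyMeasurable u μ := by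
  refine aestronglyMeasurable_iff_aemeasurable_separable.2
    ⟨hu, ⋃ n : ℕ, {y | A y ≤ n}, .iUnion fun n =>
      (hA_cpt n (ENNReal.natCast_ne_top n)).isSeparable.mono subset_closure, ?_⟩
  filter_upwards [ae_lt_top' (hA.comp_aemeasurable hu) huA] with x hx
  obtain ⟨n, hn⟩ := ENNReal.exists_nat_gt hx.ne
  exact mem_iUnion.2 ⟨n, hn.le⟩

theorem ae_exists_tendsto_of_ae_cauchySeq [UniformSpace Y] (hA : Measurable A)
    (hA_cpt : HasRelativelyCompactSublevels A) {f : ℕ → α → Y}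
    (hf : ∀ n, AEMeasurable (f n) μ) (hbdd : ⨆ n, ∫⁻ x, A (f n x) ∂μ < ⊤)
    (hcauchy : ∀ᵐ x ∂μ, CauchySeq fun n => f n x) :
    ∀ᵐ x ∂μ, ∃ y, Tendsto (fun n => f n x) atTop (𝓝 y) := by
  have hmeas : ∀ n, AEMeasurable (fun x => A (f n x)) μ := fun n => hA.comp_aemeasurable (hf n)
  have hfatou : ∫⁻ x, liminf (fun n => A (f n x)) atTop ∂μ < ⊤ :=
    calc ∫⁻ x, liminf (fun n => A (f n x)) atTop ∂μ
        ≤ liminf (fun n => ∫⁻ x, A (f n x) ∂μ) atTop := lintegral_liminf_le' hmeas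
      _ ≤ ⨆ n, ∫⁻ x, A (f n x) ∂μ := liminf_le_of_frequently_le'
          (.of_forall fun n => le_iSup (fun n => ∫⁻ x, A (f n x) ∂μ) n)
      _ < ⊤ := hbdd
  filter_upwards [hcauchy, ae_lt_top' (aemeasurable_liminf hmeas) hfatou.ne] with x hx hlim
  obtain ⟨c, hc, hc_top⟩ := exists_between hlim
  have hfreq : ∃ᶠ n in atTop, f n x ∈ closure {y | A y ≤ c} :=
    (frequently_lt_of_liminf_lt (by isBoundedDefault) hc).mono fun n hn => subset_closure hn.le
  obtain ⟨y, -, hy⟩ := (hA_cpt c hc_top.ne).exists_mapClusterPt_of_frequently hfreq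
  exact ⟨y, le_nhds_of_cauchy_adhp hx hy⟩

end RelativelyCompactSublevels

/-! ### Compactness in measure -/

theorem map_add_right_restrict_Ioo_le {T τ : ℝ} (hτ : 0 ≤ τ) :
    (volume.restrict (Ioo 0 (T - τ))).map (· + τ) ≤ volume.restrict (Ioo 0 T) := by
  have hpre : Ioo 0 (T - τ) = (· + τ) ⁻¹' Ioo τ T := by simp
  rw [hpre, ((measurePreserving_add_right volume τ).restrict_preimage measurableSet_Ioo).map_eq]
  exact Measure.restrict_mono (Ioo_subset_Ioo_left hτ) le_rfl

theorem quasiMeasurePreserving_add_right_restrict_Ioo {T τ : ℝ} (hτ : 0 ≤ τ) :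
    Measure.QuasiMeasurePreserving (· + τ) (volume.restrict (Ioo 0 (T - τ)))
      (volume.restrict (Ioo 0 T)) :=
  ⟨measurable_add_const τ, (map_add_right_restrict_Ioo_le hτ).absolutelyContinuous⟩

theorem restrict_Ioo_sub_le {T τ : ℝ} (hτ : 0 ≤ τ) :
    volume.restrict (Ioo 0 (T - τ)) ≤ volume.restrict (Ioo 0 T) :=
  Measure.restrict_mono (Ioo_subset_Ioo_right (sub_le_self T hτ)) le_rfl

theorem restrict_Ioo_comp_add_right_le {T τ : ℝ} (hτ : 0 ≤ τ) (s : Set ℝ) :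
    volume.restrict (Ioo 0 (T - τ)) {t | t + τ ∈ s} ≤ volume.restrict (Ioo 0 T) s :=
  (Measure.le_map_apply (measurable_add_const τ).aemeasurable s).trans
    (map_add_right_restrict_Ioo_le hτ s)

/-- The right translates of the functions `f k` on `(0, T)` converge to them in measure, uniformly
in `k`, as the step tends to `0`. Only points `t` with both `t` and `t + τ` in `(0, T)` count. -/
def TranslationEquicontinuousInMeasure {ι Y : Type*} [EDist Y] (T : ℝ) (f : ι → ℝ → Y) : Prop :=
  ∀ ε : ℝ≥0∞, 0 < ε → Tendsto
    (fun τ => ⨆ k, volume.restrict (Ioo 0 (T - τ)) {t | ε ≤ edist (f k (t + τ)) (f k t)})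
    (𝓝[>] 0) (𝓝 0)

theorem TranslationEquicontinuousInMeasure.exists_pos_forall_measure_le {ι Y : Type*} [EDist Y]
    {T : ℝ} {f : ι → ℝ → Y} (hf : TranslationEquicontinuousInMeasure T f) {ε η : ℝ≥0∞}
    (hε : 0 < ε) (hη : 0 < η) :
    ∃ h > 0, ENNReal.ofReal h ≤ η ∧ ∀ τ ∈ Ioo 0 (2 * h), ∀ k,
      volume.restrict (Ioo 0 (T - τ)) {t | ε ≤ edist (f k (t + τ)) (f k t)} ≤ η := by
  obtain ⟨r, hr, hsmall⟩ := mem_nhdsGT_iff_exists_Ioo_subset.1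
    ((hf ε hε).eventually (Iic_mem_nhds hη))
  have hofReal : Tendsto ENNReal.ofReal (𝓝[>] 0) (𝓝 0) :=
    (ENNReal.continuous_ofReal.tendsto' 0 0 ENNReal.ofReal_zero).mono_left nhdsWithin_le_nhds
  obtain ⟨h, hhη, hh, hhr⟩ := ((hofReal.eventually (Iic_mem_nhds hη)).and
    (Ioo_mem_nhdsGT (half_pos (mem_Ioi.1 hr)))).exists
  exact ⟨h, hh, hhη, fun τ hτ => iSup_le_iff.1 (hsmall ⟨hτ.1, by linarith [hτ.2]⟩)⟩

theorem translationEquicontinuousInMeasure_of_tendsto_iSup_lintegral {ι Y : Type*}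
    [PseudoEMetricSpace Y] {A : Y → ℝ≥0∞} (hA : LowerSemicontinuous A)
    (hA_cpt : HasRelativelyCompactSublevels A) {W : Y × Y → ℝ≥0∞}
    (hW : LowerSemicontinuous W)
    (hW_sep : ∀ u v, A u ≠ ⊤ → A v ≠ ⊤ → W (u, v) = 0 → edist u v = 0) {T : ℝ} {f : ι → ℝ → Y}
    (hf : ∀ k, AEStronglyMeasurable (f k) (volume.restrict (Ioo 0 T)))
    (hfA : ⨆ k, ∫⁻ t in Ioo 0 T, A (f k t) < ⊤)
    (hfW : Tendsto (fun τ => ⨆ k, ∫⁻ t in Ioo 0 (T - τ), W (f k (t + τ), f k t)) (𝓝[>] 0) (𝓝 0)) :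
    TranslationEquicontinuousInMeasure T f := by
  refine fun ε hε => ENNReal.tendsto_nhds_zero.2 fun η hη => ?_
  have hη3 : 0 < η / 3 := ENNReal.div_pos hη.ne' ENNReal.ofNat_ne_top
  obtain ⟨M, hM, htail⟩ := exists_forall_measure_lt_le_of_iSup_lintegral
    (fun k => aemeasurable_comp_of_lowerSemicontinuous hA (hf k)) hfA hη3
  obtain ⟨δ, hδ, hδ_top, hδW⟩ := exists_pos_forall_le_of_le_edist hA hA_cpt hW hW_sep hM hε
  filter_upwards [hfW.eventually (Iic_mem_nhds (ENNReal.mul_pos hη3.ne' hδ)),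
    self_mem_nhdsWithin] with τ hWτ (hτ : 0 < τ)
  refine iSup_le fun k => ?_
  set ν := volume.restrict (Ioo 0 (T - τ))
  have hpair : AEStronglyMeasurable (fun t => (f k (t + τ), f k t)) ν :=
    ((hf k).comp_quasiMeasurePreserving
      (quasiMeasurePreserving_add_right_restrict_Ioo hτ.le)).prodMk
      ((hf k).mono_measure (restrict_Ioo_sub_le hτ.le))
  have hWδ : ν {t | δ ≤ W (f k (t + τ), f k t)} ≤ η / 3 :=
    (meas_ge_le_lintegral_div (aemeasurable_comp_of_lowerSemicontinuous hW hpair) hδ hδ_top).trans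
      (ENNReal.div_le_of_le_mul (iSup_le_iff.1 hWτ k))
  have hcover : {t | ε ≤ edist (f k (t + τ)) (f k t)} ⊆
      ({t | M < A (f k (t + τ))} ∪ {t | M < A (f k t)}) ∪ {t | δ ≤ W (f k (t + τ), f k t)} := by
    intro t (ht : ε ≤ _)
    change (M < A (f k (t + τ)) ∨ M < A (f k t)) ∨ δ ≤ W (f k (t + τ), f k t)
    by_contra! hgood
    exact hgood.2.not_ge (hδW _ _ hgood.1.1 hgood.1.2 ht)
  calc ν {t | ε ≤ edist (f k (t + τ)) (f k t)}
      ≤ ν {t | M < A (f k (t + τ))} + ν {t | M < A (f k t)} +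
          ν {t | δ ≤ W (f k (t + τ), f k t)} :=
        (measure_mono hcover).trans ((measure_union_le _ _).trans
          (add_le_add_left (measure_union_le _ _) _))
    _ ≤ η / 3 + η / 3 + η / 3 := by
        gcongr
        · exact (restrict_Ioo_comp_add_right_le hτ.le {t | M < A (f k t)}).trans (htail k)
        · exact (restrict_Ioo_sub_le hτ.le _).trans (htail k)
    _ = η := ENNReal.add_thirds η

theorem setLIntegral_cell_sub_le {t h : ℝ} (hh : 0 < h) (ht : h ≤ t) (ψ : ℝ → ℝ≥0∞) :
    ∫⁻ s in Ioo 0 h, ψ (⌊t / h⌋ * h - s) ≤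
      ∫⁻ τ in Ioo 0 (2 * h), (Ioi 0).indicator ψ (t - τ) := by
  have hlow : ⌊t / h⌋ * h ≤ t := (le_div_iff₀ hh).1 (Int.floor_le _)
  have hupp : t < ⌊t / h⌋ * h + h := by
    simpa only [add_mul, one_mul] using (div_lt_iff₀ hh).1 (Int.lt_floor_add_one (t / h))
  have hcell : h ≤ ⌊t / h⌋ * h := le_mul_of_one_le_left hh.le <| by
    exact_mod_cast Int.le_floor.2 (by simpa using (one_le_div hh).2 ht)
  rw [← lintegral_indicator measurableSet_Ioo, ← lintegral_indicator measurableSet_Ioo,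
    ← lintegral_add_right_eq_self ((Ioo 0 (2 * h)).indicator _) (t - ⌊t / h⌋ * h)]
  refine lintegral_mono fun s => indicator_apply_le' (fun hs => ?_) fun _ => zero_le
  have hτ : s + (t - ⌊t / h⌋ * h) ∈ Ioo 0 (2 * h) := ⟨by linarith [hs.1], by linarith [hs.2]⟩
  have hnode : t - (s + (t - ⌊t / h⌋ * h)) = ⌊t / h⌋ * h - s := by ring
  have hnode_pos : ⌊t / h⌋ * h - s ∈ Ioi 0 := sub_pos.2 (hs.2.trans_le hcell)
  rw [indicator_of_mem hτ, hnode, indicator_of_mem hnode_pos]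

theorem lintegral_indicator_sub_eq {φ : ℝ × ℝ → ℝ≥0∞} (T τ : ℝ) :
    ∫⁻ t in Iio T, (Ioi 0).indicator (fun u => φ (t, u)) (t - τ) =
      ∫⁻ t in Ioo 0 (T - τ), φ (t + τ, t) := by
  rw [← lintegral_indicator measurableSet_Iio, ← lintegral_indicator measurableSet_Ioo,
    ← lintegral_add_right_eq_self _ τ]
  refine lintegral_congr fun t => ?_
  simp only [indicator, mem_Iio, mem_Ioi, mem_Ioo, add_sub_cancel_right, lt_sub_iff_add_lt]
  split_ifs <;> tauto

-- Sampling in the cell preceding that of `t` makes every step `τ` positive, so that only right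
-- translates of `φ` are involved.
theorem exists_setLIntegral_sample_le {φ : ℝ × ℝ → ℝ≥0∞} (hφ : Measurable φ) {h T : ℝ}
    (hh : 0 < h) {β : ℝ≥0∞}
    (hβ : ∀ τ ∈ Ioo 0 (2 * h), ∫⁻ t in Ioo 0 (T - τ), φ (t + τ, t) ≤ β) :
    ∃ s : ℝ, ∫⁻ t in Ioo h T, φ (t, ⌊t / h⌋ * h - s) ≤ 2 * β := by
  have hmeas : Measurable fun p : ℝ × ℝ => φ (p.2, ⌊p.2 / h⌋ * h - p.1) := by fun_prop
  have hmeas' : Measurable fun p : ℝ × ℝ => (Ioi 0).indicator (fun u => φ (p.1, u)) (p.1 - p.2) :=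
    Measurable.ite (measurableSet_lt measurable_const (measurable_fst.sub measurable_snd))
      (by fun_prop) measurable_const
  have hvol : volume (Ioo 0 h) = ENNReal.ofReal h := by rw [Real.volume_Ioo, sub_zero]
  have htotal : ∫⁻ s in Ioo 0 h, ∫⁻ t in Ioo h T, φ (t, ⌊t / h⌋ * h - s) ≤
      2 * β * volume (Ioo 0 h) :=
    calc ∫⁻ s in Ioo 0 h, ∫⁻ t in Ioo h T, φ (t, ⌊t / h⌋ * h - s)
        = ∫⁻ t in Ioo h T, ∫⁻ s in Ioo 0 h, φ (t, ⌊t / h⌋ * h - s) :=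
          lintegral_lintegral_swap hmeas.aemeasurable
      _ ≤ ∫⁻ t in Ioo h T, ∫⁻ τ in Ioo 0 (2 * h),
            (Ioi 0).indicator (fun u => φ (t, u)) (t - τ) :=
          setLIntegral_mono' measurableSet_Ioo fun t ht =>
            setLIntegral_cell_sub_le hh ht.1.le fun u => φ (t, u)
      _ ≤ ∫⁻ t in Iio T, ∫⁻ τ in Ioo 0 (2 * h), (Ioi 0).indicator (fun u => φ (t, u)) (t - τ) :=
          lintegral_mono_set Ioo_subset_Iio_self
      _ = ∫⁻ τ in Ioo 0 (2 * h), ∫⁻ t in Iio T, (Ioi 0).indicator (fun u => φ (t, u)) (t - τ) :=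
          lintegral_lintegral_swap hmeas'.aemeasurable
      _ ≤ ∫⁻ _ in Ioo 0 (2 * h), β := setLIntegral_mono' measurableSet_Ioo fun τ hτ =>
          (lintegral_indicator_sub_eq T τ).trans_le (hβ τ hτ)
      _ = 2 * β * volume (Ioo 0 h) := by
          rw [setLIntegral_const, Real.volume_Ioo, hvol, sub_zero,
            ENNReal.ofReal_mul zero_le_two, ENNReal.ofReal_ofNat]
          ring
  have hmeas_s : Measurable fun s => ∫⁻ t in Ioo h T, φ (t, ⌊t / h⌋ * h - s) :=
    hmeas.lintegral_prod_right'
  obtain ⟨s, -, hs⟩ := exists_le_setLAverage (μ := volume) (s := Ioo 0 h) (by simpa using hh)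
    (by simp) hmeas_s.aemeasurable
  refine ⟨s, hs.trans ?_⟩
  rw [setLAverage_eq]
  exact ENNReal.div_le_of_le_mul htotal

section Compactness

variable {Y : Type*} [PseudoEMetricSpace Y]

theorem exists_step_approx_of_stronglyMeasurable [MeasurableSpace Y] [BorelSpace Y] {f : ℝ → Y}
    (hf : StronglyMeasurable f) {K : Set Y} (hK : MeasurableSet K) {ε : ℝ≥0∞} {h T : ℝ}
    (hh : 0 < h) {a b : ℝ≥0∞}
    (hfK : volume.restrict (Ioo 0 T) {t | f t ∉ K} ≤ a)
    (hfτ : ∀ τ ∈ Ioo 0 (2 * h),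
      volume.restrict (Ioo 0 (T - τ)) {t | ε ≤ edist (f (t + τ)) (f t)} ≤ b) :
    ∃ v : ℤ → Y, volume.restrict (Ioo h T)
      {t | v ⌊t / h⌋ ∉ K ∨ ε ≤ edist (f t) (v ⌊t / h⌋)} ≤ 2 * (a + b) := by
  set B : Set (ℝ × ℝ) := {p | f p.2 ∉ K ∨ ε ≤ edist (f p.1) (f p.2)}
  have hB : MeasurableSet B :=
    (hf.measurable.comp measurable_snd hK.compl).union (measurableSet_le measurable_const
      ((hf.comp_measurable measurable_fst).edist (hf.comp_measurable measurable_snd)).measurable)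
  have hind : ∀ {μ : Measure ℝ} {γ : ℝ → ℝ × ℝ}, Measurable γ →
      ∫⁻ t, B.indicator 1 (γ t) ∂μ = μ (γ ⁻¹' B) := fun hγ => by
    rw [← lintegral_indicator_one (hγ hB)]; rfl
  obtain ⟨s, hs⟩ := exists_setLIntegral_sample_le (φ := B.indicator 1)
    (measurable_one.indicator hB) (T := T) (β := a + b) hh fun τ hτ => by
      rw [hind (by fun_prop)]
      exact (measure_union_le _ _).trans (add_le_add
        ((restrict_Ioo_sub_le hτ.1.le _).trans hfK) (hfτ τ hτ))
  rw [hind (by fun_prop)] at hs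
  exact ⟨fun i => f (i * h - s), hs⟩

theorem exists_step_approx [MeasurableSpace Y] [BorelSpace Y] {f : ℝ → Y} {h T : ℝ}
    (hf : AEStronglyMeasurable f (volume.restrict (Ioo 0 T))) {K : Set Y} (hK : MeasurableSet K)
    {ε : ℝ≥0∞} (hh : 0 < h) {a b : ℝ≥0∞}
    (hfK : volume.restrict (Ioo 0 T) {t | f t ∉ K} ≤ a)
    (hfτ : ∀ τ ∈ Ioo 0 (2 * h),
      volume.restrict (Ioo 0 (T - τ)) {t | ε ≤ edist (f (t + τ)) (f t)} ≤ b) :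
    ∃ v : ℤ → Y, volume.restrict (Ioo h T)
      {t | v ⌊t / h⌋ ∉ K ∨ ε ≤ edist (f t) (v ⌊t / h⌋)} ≤ 2 * (a + b) := by
  obtain ⟨g, hg, hfg⟩ := hf
  have hgK : volume.restrict (Ioo 0 T) {t | g t ∉ K} ≤ a := by
    refine (measure_mono_ae ?_).trans hfK
    filter_upwards [hfg] with t ht
    exact fun hgt => show f t ∉ K from ht ▸ hgt
  have hgτ : ∀ τ ∈ Ioo 0 (2 * h),
      volume.restrict (Ioo 0 (T - τ)) {t | ε ≤ edist (g (t + τ)) (g t)} ≤ b := by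
    refine fun τ hτ => (measure_mono_ae ?_).trans (hfτ τ hτ)
    filter_upwards [ae_mono (restrict_Ioo_sub_le hτ.1.le) hfg,
      (quasiMeasurePreserving_add_right_restrict_Ioo hτ.1.le).ae hfg] with t ht htτ
    exact fun hgt => show ε ≤ edist (f (t + τ)) (f t) from ht ▸ htτ ▸ hgt
  obtain ⟨v, hv⟩ := exists_step_approx_of_stronglyMeasurable hg hK hh hgK hgτ
  refine ⟨v, (measure_mono_ae ?_).trans hv⟩
  filter_upwards [ae_mono (Measure.restrict_mono (Ioo_subset_Ioo_left hh.le) le_rfl) hfg] with t ht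
  exact fun hft => show _ ∨ ε ≤ edist (g t) _ from ht ▸ hft

theorem eventually_edist_lt_of_totallyBounded {ι : Type*} {K : Set Y} (hK : TotallyBounded K)
    (l : Ultrafilter ι) (v : ι → Y) {ε : ℝ≥0∞} (hε : 0 < ε) :
    ∀ᶠ p : ι × ι in (l : Filter ι) ×ˢ l, v p.1 ∈ K → v p.2 ∈ K → edist (v p.1) (v p.2) < ε := by
  by_cases hv : ∀ᶠ k in (l : Filter ι), v k ∈ K
  · have hcauchy : Cauchy (Filter.map v l) :=
      (l.map v).cauchy_of_totallyBounded hK (le_principal_iff.2 hv)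
    filter_upwards [(cauchy_map_iff.1 hcauchy).2 (edist_mem_uniformity hε)] with p hp _ _ using hp
  · filter_upwards [tendsto_fst.eventually (Ultrafilter.eventually_not.2 hv)] with p hp hpK
    exact absurd hpK hp

theorem measure_le_edist_le_of_approx {α : Type*} {_ : MeasurableSpace α} {μ : Measure α}
    {K : Set Y} {f g v w : α → Y} {ε b c : ℝ≥0∞}
    (hf : μ {x | v x ∉ K ∨ ε / 3 ≤ edist (f x) (v x)} ≤ b)
    (hg : μ {x | w x ∉ K ∨ ε / 3 ≤ edist (g x) (w x)} ≤ c)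
    (hvw : ∀ᵐ x ∂μ, v x ∈ K → w x ∈ K → edist (v x) (w x) < ε / 3) :
    μ {x | ε ≤ edist (f x) (g x)} ≤ b + c := by
  refine (measure_mono_ae ?_).trans ((measure_union_le _ _).trans (add_le_add hf hg))
  filter_upwards [hvw] with x hx (hfg : ε ≤ edist (f x) (g x))
  change (v x ∉ K ∨ ε / 3 ≤ edist (f x) (v x)) ∨ w x ∉ K ∨ ε / 3 ≤ edist (g x) (w x)
  by_contra! hgood
  obtain ⟨⟨hvK, hfv⟩, hwK, hgw⟩ := hgood
  refine hfg.not_gt ?_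
  calc edist (f x) (g x) ≤ edist (f x) (v x) + edist (v x) (w x) + edist (w x) (g x) :=
        edist_triangle4 _ _ _ _
    _ < ε / 3 + ε / 3 + ε / 3 :=
        ENNReal.add_lt_add (ENNReal.add_lt_add hfv (hx hvK hwK)) (edist_comm (g x) _ ▸ hgw)
    _ = ε := ENNReal.add_thirds ε

theorem restrict_Ioo_le_ofReal_add {h T : ℝ} (s : Set ℝ) :
    volume.restrict (Ioo 0 T) s ≤ ENNReal.ofReal h + volume.restrict (Ioo h T) s :=
  calc volume.restrict (Ioo 0 T) s
      ≤ volume.restrict (Ioc 0 h) s + volume.restrict (Ioo h T) s :=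
        (Measure.restrict_mono (fun t ht => (le_or_gt t h).imp (⟨ht.1, ·⟩) (⟨·, ht.2⟩)) le_rfl
          s).trans (Measure.restrict_union_le _ _ s)
    _ ≤ ENNReal.ofReal h + volume.restrict (Ioo h T) s :=
        add_le_add_left ((measure_mono (subset_univ s)).trans (by simp)) _

theorem cauchyInMeasure_of_isTightMeasureSet {ι : Type*} [MeasurableSpace Y] [BorelSpace Y]
    {T : ℝ} {f : ι → ℝ → Y} (hf : ∀ k, AEStronglyMeasurable (f k) (volume.restrict (Ioo 0 T)))
    (htight : IsTightMeasureSet (range fun k => (volume.restrict (Ioo 0 T)).map (f k)))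
    (hequi : TranslationEquicontinuousInMeasure T f) (l : Ultrafilter ι) :
    CauchyInMeasure (volume.restrict (Ioo 0 T)) f l := by
  refine fun ε hε => ENNReal.tendsto_nhds_zero.2 fun δ hδ => ?_
  have hε3 : 0 < ε / 3 := ENNReal.div_pos hε.ne' ENNReal.ofNat_ne_top
  obtain ⟨η, hη, hηδ⟩ : ∃ η > 0, η + (2 * (η + η) + 2 * (η + η)) ≤ δ :=
    ⟨δ / 9, ENNReal.div_pos hδ.ne' ENNReal.ofNat_ne_top, by
      calc δ / 9 + (2 * (δ / 9 + δ / 9) + 2 * (δ / 9 + δ / 9)) = 9 * (δ / 9) := by ring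
        _ ≤ δ := ENNReal.mul_div_le⟩
  obtain ⟨K, hK, htail⟩ := isTightMeasureSet_iff_exists_isCompact_measure_compl_le.1 htight η hη
  obtain ⟨h, hh, hhη, hτ⟩ := hequi.exists_pos_forall_measure_le hε3 hη
  have hstep : ∀ k, ∃ v : ℤ → Y, volume.restrict (Ioo h T)
      {t | v ⌊t / h⌋ ∉ closure K ∨ ε / 3 ≤ edist (f k t) (v ⌊t / h⌋)} ≤ 2 * (η + η) := fun k =>
    exists_step_approx (hf k) isClosed_closure.measurableSet hh
      ((measure_mono fun t ht => mt (subset_closure ·) ht).trans <|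
        (Measure.le_map_apply (hf k).aemeasurable _).trans (htail _ (mem_range_self k)))
      fun τ hτ' => hτ τ hτ' k
  choose v hv using hstep
  have hnear : ∀ᶠ p : ι × ι in (l : Filter ι) ×ˢ l, ∀ i ∈ Icc 0 ⌊T / h⌋,
      v p.1 i ∈ closure K → v p.2 i ∈ closure K → edist (v p.1 i) (v p.2 i) < ε / 3 :=
    (finite_Icc _ _).eventually_all.2 fun i _ =>
      eventually_edist_lt_of_totallyBounded hK.closure.totallyBounded l (v · i) hε3
  filter_upwards [hnear] with p hp
  calc volume.restrict (Ioo 0 T) {t | ε ≤ edist (f p.1 t) (f p.2 t)}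
      ≤ ENNReal.ofReal h + volume.restrict (Ioo h T) {t | ε ≤ edist (f p.1 t) (f p.2 t)} :=
        restrict_Ioo_le_ofReal_add _
    _ ≤ η + (2 * (η + η) + 2 * (η + η)) := by
        refine add_le_add hhη (measure_le_edist_le_of_approx (hv p.1) (hv p.2) ?_)
        filter_upwards [ae_restrict_mem measurableSet_Ioo] with t ht
        exact hp _ ⟨Int.floor_nonneg.2 (div_nonneg (hh.trans ht.1).le hh.le),
          Int.floor_le_floor (div_le_div_of_nonneg_right ht.2.le hh.le)⟩
    _ ≤ δ := hηδ

end Compactness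

theorem tendsto_measure_setOf_lt_norm_sub {α E ι : Type*} [SeminormedAddCommGroup E]
    {_ : MeasurableSpace α} {μ : Measure α} {s : Set α} (hs : MeasurableSet s) {f : ι → α → E}
    {g : α → E} {l : Filter ι} (hf : TendstoInMeasure (μ.restrict s) f l g) {ε : ℝ} (hε : 0 < ε) :
    Tendsto (fun k => μ {x | x ∈ s ∧ ε < ‖f k x - g x‖}) l (𝓝 0) :=
  tendsto_of_tendsto_of_tendsto_of_le_of_le tendsto_const_nhds
    (tendstoInMeasure_iff_norm.1 hf ε hε) (fun _ => zero_le) fun k => by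
      rw [Measure.restrict_apply' hs]
      exact measure_mono fun x hx => ⟨hx.2.le, hx.1⟩

theorem aubin_lions_extension_general
    {Y : Type*} [PseudoEMetricSpace Y] [MeasurableSpace Y] [BorelSpace Y] {T : ℝ}
    {A : Y → ℝ≥0∞} (hA_lsc : LowerSemicontinuous A)
    (hA_cpt : HasRelativelyCompactSublevels A) {W : Y × Y → ℝ≥0∞} (hW_lsc : LowerSemicontinuous W)
    (hW_sep : ∀ u v : Y, A u ≠ ⊤ → A v ≠ ⊤ → W (u, v) = 0 → edist u v = 0)
    {U : ℕ → ℝ → Y} (hU_meas : ∀ k, AEMeasurable (U k) (volume.restrict (Ioo 0 T)))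
    (hU_A : (⨆ k, ∫⁻ t in Ioo (0 : ℝ) T, A (U k t)) < ⊤)
    (hU_W : Tendsto
      (fun h : ℝ => ⨆ k, ∫⁻ t in Ioo (0 : ℝ) (T - h), W (U k (t + h), U k t))
      (𝓝[>] (0 : ℝ)) (𝓝 0)) :
    ∃ φ : ℕ → ℕ, StrictMono φ ∧ ∃ V : ℝ → Y,
      TendstoInMeasure (volume.restrict (Ioo 0 T)) (fun k => U (φ k)) atTop V := by
  have hU : ∀ k, AEStronglyMeasurable (U k) (volume.restrict (Ioo 0 T)) := fun k =>
    aestronglyMeasurable_of_lintegral_ne_top hA_lsc.measurable hA_cpt (hU_meas k)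
      (ne_top_of_le_ne_top hU_A.ne (le_iSup (fun k => ∫⁻ t in Ioo (0 : ℝ) T, A (U k t)) k))
  have htight := isTightMeasureSet_range_map_of_iSup_lintegral hA_lsc.measurable hA_cpt
    hU_meas hU_A
  have hequi := translationEquicontinuousInMeasure_of_tendsto_iSup_lintegral hA_lsc hA_cpt
    hW_lsc hW_sep hU hU_A hU_W
  obtain ⟨φ, hφ, hcauchy⟩ := (cauchyInMeasure_of_isTightMeasureSet hU htight hequi
    (hyperfilter ℕ)).exists_subseq_ae_cauchySeq Nat.hyperfilter_le_atTop
  have hbdd : ⨆ n, ∫⁻ t in Ioo (0 : ℝ) T, A (U (φ n) t) < ⊤ :=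
    (iSup_comp_le (fun k => ∫⁻ t in Ioo (0 : ℝ) T, A (U k t)) φ).trans_lt hU_A
  have hlim := ae_exists_tendsto_of_ae_cauchySeq hA_lsc.measurable hA_cpt
    (fun n => hU_meas (φ n)) hbdd hcauchy
  have : Nonempty Y := ⟨U 0 0⟩
  exact ⟨φ, hφ, fun t => limUnder atTop fun n => U (φ n) t,
    tendstoInMeasure_of_tendsto_ae (fun n => hU (φ n))
      (hlim.mono fun t ht => tendsto_nhds_limUnder ht)⟩

/-- Extension of the Aubin–Lions lemma, Rossi–Savaré: Let `Y` be a Banach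
space, `𝒜 : Y → [0,∞]` lower semicontinuous with relatively compact sublevels, and
`𝒲 : Y × Y → [0,∞]` lower semicontinuous such that `𝒲(u,ũ) = 0` with
`𝒜(u), 𝒜(ũ) < ∞` implies `u = ũ`. If `(U_k)` is a sequence of measurable functions
`(0,T) → Y` with `sup_k ∫₀^T 𝒜(U_k(t)) dt < ∞` and
`lim_{h→0⁺} sup_k ∫₀^{T−h} 𝒲(U_k(t+h),U_k(t)) dt = 0`, then a subsequence of `(U_k)`
converges in measure on `(0,T)` to a limit `U : (0,T) → Y`. -/
theorem aubin_lions_extension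
    {Y : Type*} [NormedAddCommGroup Y] [NormedSpace ℝ Y] [CompleteSpace Y]
    [MeasurableSpace Y] [BorelSpace Y]
    (T : ℝ) (hT : 0 < T)
    (A : Y → ℝ≥0∞) (hA_lsc : LowerSemicontinuous A)
    (hA_cpt : ∀ c : ℝ≥0∞, c ≠ ⊤ → IsCompact (closure {y : Y | A y ≤ c}))
    (W : Y × Y → ℝ≥0∞) (hW_lsc : LowerSemicontinuous W)
    (hW_sep : ∀ u v : Y, A u ≠ ⊤ → A v ≠ ⊤ → W (u, v) = 0 → u = v)
    (U : ℕ → ℝ → Y)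
    (hU_meas : ∀ k, Measurable ((Ioo (0 : ℝ) T).restrict (U k)))
    (hU_A : (⨆ k, ∫⁻ t in Ioo (0 : ℝ) T, A (U k t)) < ⊤)
    (hU_W : Tendsto
      (fun h : ℝ => ⨆ k, ∫⁻ t in Ioo (0 : ℝ) (T - h), W (U k (t + h), U k t))
      (𝓝[>] (0 : ℝ)) (𝓝 0)) :
    ∃ φ : ℕ → ℕ, StrictMono φ ∧ ∃ V : ℝ → Y,
      ∀ ε : ℝ, 0 < ε →
        Tendsto (fun k => volume {t | t ∈ Ioo (0 : ℝ) T ∧ ε < ‖U (φ k) t - V t‖})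
          atTop (𝓝 0) := by
  obtain ⟨φ, hφ, V, hV⟩ := aubin_lions_extension_general hA_lsc hA_cpt hW_lsc
    (fun u v hu hv huv => edist_eq_zero.2 (hW_sep u v hu hv huv))
    (fun k => aemeasurable_restrict_of_measurable_subtype measurableSet_Ioo (hU_meas k)) hU_A hU_W
  exact ⟨φ, hφ, V, fun _ hε => tendsto_measure_setOf_lt_norm_sub measurableSet_Ioo hV hε⟩
end

section
/- (Local uniform convergence, case S = ∞.) Let S = ∞, let m satisfy (M) and (M-S), i.e. lim_{z→0⁺} m'(z)² f(z) = 0, and let (δ_k)_{k∈ℕ} be a vanishing sequence in (0, δ̄) with δ̄ < sup m. For each k define z_{δ_k} as the unique solution of m(z) = δ_k, m_{δ_k}(z) := m(z + z_{δ_k}) − δ_k, f_{δ_k}(z) := ∫₀^z √(2/m_{δ_k}(r)) dr, g_{δ_k} := f_{δ_k}^{−1}, and G_{δ_k} : [0,∞) → ℝ, G_{δ_k}(w) := m_{δ_k}'(g_{δ_k}(w)) √w. Then the map G : [0,∞) → ℝ defined by G(w) := m'(g(w)) √w for w > 0 and G(0) := 0 (with g := f^{−1}) is continuous, and there exists a subsequence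 of (G_{δ_k})_{k∈ℕ} that converges to G locally uniformly on [0,∞). -/
open MeasureTheory Set Filter Topology

/-!
Write `f` for the Lamperti transform `z ↦ ∫₀ᶻ √(2/m)` of `m`, and `f_ζ`, `g_ζ` for the Lamperti
transform of `m (· + ζ) - m ζ` and its inverse. As `ζ → 0⁺`, dominated convergence gives
`f_ζ → f` pointwise; since these functions are monotone, `g_ζ` converges continuously to `g`. Away
from `w = 0` the claim then follows from the continuity of `m'`.

At `w = 0` one needs `m' (x + ζ)² f_ζ x → 0` as `x` and `ζ` tend to `0`. A concave function
`n ≥ 0` satisfies `n r ≥ (n b / b) r` on `(0, b]`, hence `n b * (f_n b)² ≤ 8 b²`. Using this once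
for `m` and once for `m (· + ζ) - m ζ` gives, with `y = x + ζ`, the bound
`m' y ^ 2 * f_ζ x ≤ 8 * m y / f y`. Finally `m / f → 0` at `0⁺` by L'Hôpital's rule applied to
`√m / √f`, because the quotient of the derivatives is `m' √f / √2`.
-/

section ContinuousConvergence

variable {ι α β : Type*} {l : Filter ι}

lemma tendsto_rightInverse_of_monotoneOn [LinearOrder α] [TopologicalSpace α] [OrderTopology α]
    [LinearOrder β] [TopologicalSpace β] [OrderClosedTopology β] {c : α} {t : Set β}
    {f : α → β} {g : β → α} {F : ι → α → β} {G : ι → β → α}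
    (hf : StrictMonoOn f (Ici c)) (hF : ∀ k, MonotoneOn (F k) (Ici c))
    (hlim : ∀ z, c ≤ z → Tendsto (fun k => F k z) l (𝓝 (f z)))
    (hg : ∀ w ∈ t, c ≤ g w ∧ f (g w) = w) (hG : ∀ k, ∀ w ∈ t, c ≤ G k w ∧ F k (G k w) = w)
    {w : β} (hw : w ∈ t) :
    Tendsto (fun q : ι × β => G q.1 q.2) (l ×ˢ 𝓝[t] w) (𝓝 (g w)) := by
  have hsnd : Tendsto (fun q : ι × β => q.2) (l ×ˢ 𝓝[t] w) (𝓝 w) :=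
    tendsto_snd.mono_right nhdsWithin_le_nhds
  have hmem : ∀ᶠ q : ι × β in l ×ˢ 𝓝[t] w, q.2 ∈ t := tendsto_snd.eventually self_mem_nhdsWithin
  have hFz : ∀ z, c ≤ z → Tendsto (fun q : ι × β => F q.1 z) (l ×ˢ 𝓝[t] w) (𝓝 (f z)) :=
    fun z hz => (hlim z hz).comp tendsto_fst
  obtain ⟨hgw, hfg⟩ := hg w hw
  refine tendsto_order.2 ⟨fun a ha => ?_, fun b hb => ?_⟩
  · rcases lt_or_ge a c with hac | hca
    · filter_upwards [hmem] with q hq using hac.trans_le (hG q.1 q.2 hq).1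
    have hfa : f a < w := hfg ▸ hf hca hgw ha
    filter_upwards [hmem, (hFz a hca).eventually_lt hsnd hfa] with q hq hlt
    obtain ⟨hGc, hFG⟩ := hG q.1 q.2 hq
    exact (hF q.1).reflect_lt hca hGc (hFG.symm ▸ hlt)
  · have hcb : c ≤ b := hgw.trans hb.le
    have hfb : w < f b := hfg ▸ hf hgw hcb hb
    filter_upwards [hmem, hsnd.eventually_lt (hFz b hcb) hfb] with q hq hlt
    obtain ⟨hGc, hFG⟩ := hG q.1 q.2 hq
    exact (hF q.1).reflect_lt hGc hcb (hFG.symm ▸ hlt)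

lemma continuousOn_of_forall_tendsto_prod [TopologicalSpace α] [TopologicalSpace β]
    [RegularSpace β] [l.NeBot] {F : ι → α → β} {f : α → β} {s : Set α}
    (h : ∀ x ∈ s, Tendsto (fun q : ι × α => F q.1 q.2) (l ×ˢ 𝓝[s] x) (𝓝 (f x))) :
    ContinuousOn f s := by
  have hpt : ∀ x ∈ s, Tendsto (fun k => F k x) l (𝓝 (f x)) := fun x hx =>
    (h x hx).comp (tendsto_id.prodMk (tendsto_const_pure.mono_right (pure_le_nhdsWithin hx)))
  refine fun x hx => (closed_nhds_basis (f x)).tendsto_right_iff.2 fun V ⟨hV, hVc⟩ => ?_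
  have hFV : ∀ᶠ y in 𝓝[s] x, ∀ᶠ k in l, F k y ∈ V :=
    (((h x hx).comp tendsto_prod_swap).eventually hV).curry
  filter_upwards [hFV, self_mem_nhdsWithin] with y hy hys
  exact hVc.mem_of_tendsto (hpt y hys) hy

lemma tendstoLocallyUniformlyOn_of_forall_tendsto_prod [TopologicalSpace α] [UniformSpace β]
    {F : ι → α → β} {f : α → β} {s : Set α} (hf : ContinuousOn f s)
    (h : ∀ x ∈ s, Tendsto (fun q : ι × α => F q.1 q.2) (l ×ˢ 𝓝[s] x) (𝓝 (f x))) :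
    TendstoLocallyUniformlyOn F f l s :=
  tendstoLocallyUniformlyOn_iff_forall_tendsto.2 fun x hx =>
    (((hf x hx).tendsto.comp tendsto_snd).prodMk_nhds (h x hx)).mono_right
      (nhds_le_uniformity (f x))

end ContinuousConvergence

section Concave

lemma continuousOn_deriv_of_concaveOn {s : Set ℝ} {f : ℝ → ℝ} (hs : IsOpen s)
    (hf : ConcaveOn ℝ s f) (hd : DifferentiableOn ℝ f s) : ContinuousOn (deriv f) s := by
  intro x hx
  have hdiff : ∀ y ∈ s, DifferentiableAt ℝ f y := fun y hy => hd.differentiableAt (hs.mem_nhds hy)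
  have hxs : ∀ᶠ y in 𝓝 x, y ∈ s := hs.mem_nhds hx
  have hslope : Tendsto (slope f x) (𝓝[≠] x) (𝓝 (deriv f x)) :=
    hasDerivAt_iff_tendsto_slope.1 (hdiff x hx).hasDerivAt
  have hslope' : ∀ y, y ≠ x → Tendsto (fun u => slope f u y) (𝓝 x) (𝓝 (slope f x y)) := by
    intro y hy
    simp only [slope_def_field]
    exact (tendsto_const_nhds.sub (hdiff x hx).continuousAt).div
      (tendsto_const_nhds.sub tendsto_id) (sub_ne_zero.2 hy)
  refine ContinuousAt.continuousWithinAt (tendsto_order.2 ⟨fun a ha => ?_, fun b hb => ?_⟩)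
  · obtain ⟨y, hay, hys, hxy⟩ : ∃ y, a < slope f x y ∧ y ∈ s ∧ x < y :=
      (((hslope.mono_left (nhdsGT_le_nhdsNE x)).eventually_const_lt ha).and
        ((hxs.filter_mono nhdsWithin_le_nhds).and self_mem_nhdsWithin)).exists
    filter_upwards [(hslope' y hxy.ne').eventually_const_lt hay, hxs, Iio_mem_nhds hxy]
      with u hau hus huy
    exact hau.trans_le (hf.slope_le_deriv hus hys huy (hdiff u hus))
  · obtain ⟨y, hyb, hys, hyx⟩ : ∃ y, slope f x y < b ∧ y ∈ s ∧ y < x :=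
      (((hslope.mono_left (nhdsLT_le_nhdsNE x)).eventually_lt_const hb).and
        ((hxs.filter_mono nhdsWithin_le_nhds).and self_mem_nhdsWithin)).exists
    filter_upwards [(hslope' y hyx.ne).eventually_lt_const hyb, hxs, Ioi_mem_nhds hyx]
      with u hub hus hyu
    refine (hf.deriv_le_slope hys hus hyu (hdiff u hus)).trans_lt ?_
    rwa [slope_comm]

lemma monotoneOn_Ioi_of_concaveOn_of_bddBelow {c : ℝ} {n : ℝ → ℝ} (hn : ConcaveOn ℝ (Ioi c) n)
    (hbdd : BddBelow (n '' Ioi c)) : MonotoneOn n (Ioi c) := by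
  intro x hx y hy hxy
  by_contra! hlt
  have hxy' : x < y := hxy.lt_of_ne (by rintro rfl; exact hlt.false)
  obtain ⟨L, hL⟩ := hbdd
  set σ := (n y - n x) / (y - x)
  have hσ : σ < 0 := div_neg_of_neg_of_pos (sub_neg.2 hlt) (sub_pos.2 hxy')
  have hline : ∀ z, y < z → n z ≤ n y + σ * (z - y) := fun z hyz => by
    have := hn.slope_anti_adjacent hx (hy.trans hyz) hxy' hyz
    rw [div_le_iff₀ (sub_pos.2 hyz)] at this
    linarith
  have hLz : ∀ z, y < z → L ≤ n y + σ * (z - y) := fun z hyz =>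
    (hL (mem_image_of_mem n (hy.trans hyz))).trans (hline z hyz)
  have hbot : Tendsto (fun z => n y + σ * (z - y)) atTop atBot :=
    tendsto_atBot_add_const_left _ _
      ((tendsto_atTop_add_const_right _ _ tendsto_id).const_mul_atTop_of_neg hσ)
  obtain ⟨z, hzL, hyz⟩ := ((hbot.eventually_lt_atBot L).and (eventually_gt_atTop y)).exists
  exact (hLz z hyz).not_gt hzL

variable {n : ℝ → ℝ} (hn : ConcaveOn ℝ (Ioi 0) n) (hn0 : ∀ x, 0 < x → 0 ≤ n x)
include hn hn0

lemma monotoneOn_Ioi_of_concaveOn_of_nonneg : MonotoneOn n (Ioi 0) :=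
  monotoneOn_Ioi_of_concaveOn_of_bddBelow hn ⟨0, forall_mem_image.2 hn0⟩

lemma antitoneOn_div_self_of_concaveOn_of_nonneg : AntitoneOn (fun x => n x / x) (Ioi 0) := by
  intro r hr b hb hrb
  rcases hrb.eq_or_lt with rfl | hrb
  · rfl
  have hchord : ∀ a ∈ Ioo 0 r, (r - a) * n b ≤ (b - a) * n r := fun a ha => by
    have hslope := hn.slope_anti_adjacent ha.1 hb ha.2 hrb
    rw [div_le_div_iff₀ (sub_pos.2 hrb) (sub_pos.2 ha.2)] at hslope
    linarith [mul_nonneg (sub_nonneg.2 hrb.le) (hn0 a ha.1)]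
  have hlim : ∀ u v : ℝ, Tendsto (fun a => (u - a) * v) (𝓝[>] 0) (𝓝 (u * v)) := fun u v =>
    tendsto_nhdsWithin_of_tendsto_nhds (Continuous.tendsto' (by fun_prop) _ _ (by simp))
  have hrnb : r * n b ≤ b * n r :=
    le_of_tendsto_of_tendsto (hlim r (n b)) (hlim b (n r))
      (eventually_of_mem (Ioo_mem_nhdsGT hr) hchord)
  rw [div_le_div_iff₀ hb hr]
  linarith

lemma deriv_nonneg_of_concaveOn_of_nonneg {x : ℝ} (hx : 0 < x) : 0 ≤ deriv n x := by
  rw [← derivWithin_of_mem_nhds (Ioi_mem_nhds hx)]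
  exact (monotoneOn_Ioi_of_concaveOn_of_nonneg hn hn0).derivWithin_nonneg

lemma deriv_mul_self_le_of_concaveOn_of_nonneg {x : ℝ} (hx : 0 < x) : deriv n x * x ≤ n x := by
  by_cases hd : DifferentiableAt ℝ n x
  · have hquot := (hd.hasDerivAt.div (hasDerivAt_id x) hx.ne').hasDerivWithinAt.derivWithin
      (isOpen_Ioi.uniqueDiffWithinAt hx)
    have hle := (antitoneOn_div_self_of_concaveOn_of_nonneg hn hn0).derivWithin_nonpos (x := x)
    rw [show (fun x => n x / x) = n / id from rfl, hquot, id, mul_one] at hle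
    linarith [nonpos_of_mul_nonpos_left (div_eq_mul_inv _ (x ^ 2) ▸ hle) (by positivity)]
  · rw [deriv_zero_of_not_differentiableAt hd, zero_mul]
    exact hn0 x hx

end Concave

lemma concaveOn_of_contDiffOn_of_deriv2_nonpos {s : Set ℝ} {f : ℝ → ℝ} (hs : IsOpen s)
    (hconv : Convex ℝ s) (hf : ContDiffOn ℝ 2 f s) (hf'' : ∀ x ∈ s, deriv (deriv f) x ≤ 0) :
    ConcaveOn ℝ s f :=
  concaveOn_of_deriv2_nonpos' hconv (hf.differentiableOn two_ne_zero)
    ((hf.deriv_of_isOpen hs (m := 1) (by norm_num)).differentiableOn one_ne_zero) hf''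

section SqrtDiv

lemma eqOn_sqrt_div_rpow (c : ℝ) :
    EqOn (fun r => √(c / r)) (fun r => √c * r ^ (-(1 / 2) : ℝ)) (Ioi 0) := fun r hr => by
  beta_reduce
  rw [Real.sqrt_div' _ hr.le, Real.rpow_neg hr.le, ← Real.sqrt_eq_rpow, div_eq_mul_inv]

lemma integrableOn_sqrt_div (c : ℝ) {x : ℝ} (hx : 0 ≤ x) :
    IntegrableOn (fun r => √(c / r)) (Ioo 0 x) := by
  have hrpow := (intervalIntegral.intervalIntegrable_rpow' (a := 0) (b := x) (r := -(1 / 2))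
    (by norm_num)).const_mul √c
  rw [intervalIntegrable_iff_integrableOn_Ioo_of_le hx] at hrpow
  exact hrpow.congr_fun ((eqOn_sqrt_div_rpow c).symm.mono Ioo_subset_Ioi_self) measurableSet_Ioo

lemma setIntegral_sqrt_div (c : ℝ) {x : ℝ} (hx : 0 ≤ x) :
    ∫ r in Ioo 0 x, √(c / r) = 2 * √c * √x := by
  rw [setIntegral_congr_fun measurableSet_Ioo ((eqOn_sqrt_div_rpow c).mono Ioo_subset_Ioi_self),
    ← integral_Ioc_eq_integral_Ioo, ← intervalIntegral.integral_of_le hx,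
    intervalIntegral.integral_const_mul, integral_rpow (Or.inl (by norm_num)), Real.sqrt_eq_rpow x]
  norm_num
  ring

end SqrtDiv

/-- The Lamperti transform `f(z) = ∫₀ᶻ √(2 / n(r)) dr` of a function `n`. For `z ≤ 0` the domain
of integration is empty and the value is `0`. -/
noncomputable def lampertiTransform (n : ℝ → ℝ) (z : ℝ) : ℝ :=
  ∫ r in Ioo 0 z, √(2 / n r)

section Lamperti

lemma lampertiTransform_zero (n : ℝ → ℝ) : lampertiTransform n 0 = 0 := by
  simp [lampertiTransform]

lemma lampertiTransform_nonneg (n : ℝ → ℝ) (z : ℝ) : 0 ≤ lampertiTransform n z :=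
  integral_nonneg fun _ => Real.sqrt_nonneg _

lemma lampertiTransform_eq_intervalIntegral (n : ℝ → ℝ) {z : ℝ} (hz : 0 ≤ z) :
    lampertiTransform n z = ∫ r in 0..z, √(2 / n r) := by
  rw [lampertiTransform, intervalIntegral.integral_of_le hz, integral_Ioc_eq_integral_Ioo]

section Nonneg

variable {n : ℝ → ℝ} (hn : ConcaveOn ℝ (Ioi 0) n) (hn0 : ∀ x, 0 < x → 0 ≤ n x)
include hn hn0

lemma sqrt_two_div_le_of_concaveOn {r b : ℝ} (hr : 0 < r) (hrb : r ≤ b) :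
    √(2 / n r) ≤ √(2 * b / n b / r) := by
  have hb : 0 < b := hr.trans_le hrb
  have hmono : n r ≤ n b := monotoneOn_Ioi_of_concaveOn_of_nonneg hn hn0 hr hb hrb
  rcases (hn0 r hr).eq_or_lt with hnr | hnr
  · rw [← hnr, div_zero, Real.sqrt_zero]
    exact Real.sqrt_nonneg _
  have hnb : 0 < n b := hnr.trans_le hmono
  have hdiv : n b / b ≤ n r / r := antitoneOn_div_self_of_concaveOn_of_nonneg hn hn0 hr hb hrb
  rw [div_le_div_iff₀ hb hr] at hdiv
  refine Real.sqrt_le_sqrt ?_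
  rw [div_div, div_le_div_iff₀ hnr (mul_pos hnb hr)]
  linarith

lemma aestronglyMeasurable_sqrt_two_div_of_concaveOn (b : ℝ) :
    AEStronglyMeasurable (fun r => √(2 / n r)) (volume.restrict (Ioo 0 b)) :=
  ((aemeasurable_restrict_of_monotoneOn measurableSet_Ioo
    ((monotoneOn_Ioi_of_concaveOn_of_nonneg hn hn0).mono Ioo_subset_Ioi_self)).const_div
      2).sqrt.aestronglyMeasurable

lemma integrableOn_sqrt_two_div_of_concaveOn {b : ℝ} (hb : 0 ≤ b) :
    IntegrableOn (fun r => √(2 / n r)) (Ioo 0 b) := by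
  refine (integrableOn_sqrt_div (2 * b / n b) hb).mono'
    (aestronglyMeasurable_sqrt_two_div_of_concaveOn hn hn0 b) ?_
  filter_upwards [ae_restrict_mem measurableSet_Ioo] with r hr
  rw [Real.norm_of_nonneg (Real.sqrt_nonneg _)]
  exact sqrt_two_div_le_of_concaveOn hn hn0 hr.1 hr.2.le

lemma monotoneOn_lampertiTransform : MonotoneOn (lampertiTransform n) (Ici 0) :=
  fun _ _ _ hb hab => setIntegral_mono_set (integrableOn_sqrt_two_div_of_concaveOn hn hn0 hb)
    (Eventually.of_forall fun _ => Real.sqrt_nonneg _) (Ioo_subset_Ioo_right hab).eventuallyLE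

lemma mul_lampertiTransform_sq_le {b : ℝ} (hb : 0 < b) :
    n b * lampertiTransform n b ^ 2 ≤ 8 * b ^ 2 := by
  have hle : lampertiTransform n b ≤ 2 * √(2 * b / n b) * √b :=
    (setIntegral_mono_on (integrableOn_sqrt_two_div_of_concaveOn hn hn0 hb.le)
      (integrableOn_sqrt_div _ hb.le) measurableSet_Ioo
      fun r hr => sqrt_two_div_le_of_concaveOn hn hn0 hr.1 hr.2.le).trans_eq
      (setIntegral_sqrt_div _ hb.le)
  rcases (hn0 b hb).eq_or_lt with hnb | hnb
  · rw [← hnb, zero_mul]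
    positivity
  calc n b * lampertiTransform n b ^ 2
      ≤ n b * (2 * √(2 * b / n b) * √b) ^ 2 := by
        gcongr
        exact lampertiTransform_nonneg n b
    _ = 8 * b ^ 2 := by
        rw [mul_pow, mul_pow, Real.sq_sqrt (by positivity), Real.sq_sqrt hb.le]
        field_simp
        ring

lemma deriv_mul_lampertiTransform_sq_le {x : ℝ} (hx : 0 ≤ x) :
    deriv n x * lampertiTransform n x ^ 2 ≤ 8 * x := by
  rcases hx.eq_or_lt with rfl | hx
  · simp [lampertiTransform_zero]
  refine le_of_mul_le_mul_right ?_ hx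
  calc deriv n x * lampertiTransform n x ^ 2 * x
      = deriv n x * x * lampertiTransform n x ^ 2 := by ring
    _ ≤ n x * lampertiTransform n x ^ 2 := by
        gcongr
        exact deriv_mul_self_le_of_concaveOn_of_nonneg hn hn0 hx
    _ ≤ 8 * x * x := (mul_lampertiTransform_sq_le hn hn0 hx).trans_eq (by ring)

end Nonneg

lemma tendsto_lampertiTransform_of_concaveOn {ι : Type*} {l : Filter ι} [l.IsCountablyGenerated]
    {N : ι → ℝ → ℝ} {n : ℝ → ℝ} (hN : ∀ᶠ k in l, ConcaveOn ℝ (Ioi 0) (N k))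
    (hN0 : ∀ᶠ k in l, ∀ x, 0 < x → 0 ≤ N k x) (hn : ∀ x, 0 < x → 0 < n x)
    (hlim : ∀ x, 0 < x → Tendsto (fun k => N k x) l (𝓝 (n x))) {b : ℝ} (hb : 0 ≤ b) :
    Tendsto (fun k => lampertiTransform (N k) b) l (𝓝 (lampertiTransform n b)) := by
  rcases hb.eq_or_lt with rfl | hb
  · simp only [lampertiTransform_zero, tendsto_const_nhds]
  have hnb := hn b hb
  refine tendsto_integral_filter_of_dominated_convergence (fun r => √(2 * b / (n b / 2) / r))
    ?_ ?_ (integrableOn_sqrt_div _ hb.le) ?_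
  · filter_upwards [hN, hN0] with k hk hk0
    exact aestronglyMeasurable_sqrt_two_div_of_concaveOn hk hk0 b
  · filter_upwards [hN, hN0, (hlim b hb).eventually_const_lt (half_lt_self hnb)]
      with k hk hk0 hkb
    filter_upwards [ae_restrict_mem measurableSet_Ioo] with r hr
    have hr0 := hr.1
    rw [Real.norm_of_nonneg (Real.sqrt_nonneg _)]
    exact (sqrt_two_div_le_of_concaveOn hk hk0 hr0 hr.2.le).trans (by gcongr)
  · filter_upwards [ae_restrict_mem measurableSet_Ioo] with r hr
    exact (tendsto_const_nhds.div (hlim r hr.1) (hn r hr.1).ne').sqrt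

variable {m : ℝ → ℝ} (hm : ConcaveOn ℝ (Ioi 0) m) (hpos : ∀ x, 0 < x → 0 < m x)
include hm hpos

lemma intervalIntegrable_sqrt_two_div {a b : ℝ} (ha : 0 ≤ a) (hab : a ≤ b) :
    IntervalIntegrable (fun r => √(2 / m r)) volume a b :=
  (intervalIntegrable_iff_integrableOn_Ioo_of_le hab).2
    ((integrableOn_sqrt_two_div_of_concaveOn hm (fun x hx => (hpos x hx).le)
      (ha.trans hab)).mono_set (Ioo_subset_Ioo_left ha))

lemma strictMonoOn_lampertiTransform : StrictMonoOn (lampertiTransform m) (Ici 0) := by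
  intro a ha b hb hab
  have hint : ∀ {u v}, 0 ≤ u → u ≤ v → IntervalIntegrable (fun r => √(2 / m r)) volume u v :=
    intervalIntegrable_sqrt_two_div hm hpos
  have hgap : 0 < ∫ r in a..b, √(2 / m r) :=
    intervalIntegral.intervalIntegral_pos_of_pos_on (hint ha hab.le)
      (fun r hr => Real.sqrt_pos.2 (div_pos two_pos (hpos r (ha.trans_lt hr.1)))) hab
  rw [lampertiTransform_eq_intervalIntegral m ha, lampertiTransform_eq_intervalIntegral m hb,
    ← intervalIntegral.integral_add_adjacent_intervals (hint le_rfl ha) (hint ha hab.le)]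
  exact lt_add_of_pos_right _ hgap

lemma lampertiTransform_pos {z : ℝ} (hz : 0 < z) : 0 < lampertiTransform m z :=
  lampertiTransform_zero m ▸ strictMonoOn_lampertiTransform hm hpos self_mem_Ici hz.le hz

lemma hasDerivAt_lampertiTransform {z : ℝ} (hz : 0 < z) :
    HasDerivAt (lampertiTransform m) √(2 / m z) z := by
  have hcont : ContinuousOn (fun r => √(2 / m r)) (Ioi 0) :=
    (continuousOn_const.div (hm.continuousOn isOpen_Ioi) fun r hr => (hpos r hr).ne').sqrt
  have hFTC := intervalIntegral.integral_hasDerivAt_right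
    (intervalIntegrable_sqrt_two_div hm hpos le_rfl hz.le)
    (hcont.stronglyMeasurableAtFilter isOpen_Ioi z hz) (hcont.continuousAt (Ioi_mem_nhds hz))
  refine hFTC.congr_of_eventuallyEq ?_
  filter_upwards [Ioi_mem_nhds hz] with u hu
  exact lampertiTransform_eq_intervalIntegral m hu.le

lemma tendsto_lampertiTransform_zero : Tendsto (lampertiTransform m) (𝓝[>] 0) (𝓝 0) := by
  have hprim := intervalIntegral.continuousOn_primitive_interval'
    (intervalIntegrable_sqrt_two_div hm hpos le_rfl zero_le_one) left_mem_uIcc 0 left_mem_uIcc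
  rw [ContinuousWithinAt, intervalIntegral.integral_same, uIcc_of_le zero_le_one] at hprim
  have hIoo : Ioo (0 : ℝ) 1 ∈ 𝓝[>] 0 := Ioo_mem_nhdsGT one_pos
  refine (hprim.mono_left (nhdsWithin_le_of_mem (mem_of_superset hIoo Ioo_subset_Icc_self))).congr'
    ?_
  filter_upwards [self_mem_nhdsWithin] with u hu
  exact (lampertiTransform_eq_intervalIntegral m (le_of_lt hu)).symm

lemma tendsto_div_lampertiTransform (hd : DifferentiableOn ℝ m (Ioi 0))
    (hm0 : Tendsto m (𝓝[>] 0) (𝓝 0))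
    (hMS : Tendsto (fun z => deriv m z ^ 2 * lampertiTransform m z) (𝓝[>] 0) (𝓝 0)) :
    Tendsto (fun z => m z / lampertiTransform m z) (𝓝[>] 0) (𝓝 0) := by
  have hgt : ∀ᶠ z : ℝ in 𝓝[>] 0, 0 < z := self_mem_nhdsWithin
  have hnum : ∀ᶠ z in 𝓝[>] 0, HasDerivAt (fun z => √(m z)) (deriv m z / (2 * √(m z))) z :=
    hgt.mono fun z hz =>
      (hd.differentiableAt (Ioi_mem_nhds hz)).hasDerivAt.sqrt (hpos z hz).ne'
  have hden : ∀ᶠ z in 𝓝[>] 0, HasDerivAt (fun z => √(lampertiTransform m z))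
      (√(2 / m z) / (2 * √(lampertiTransform m z))) z :=
    hgt.mono fun z hz =>
      (hasDerivAt_lampertiTransform hm hpos hz).sqrt (lampertiTransform_pos hm hpos hz).ne'
  have hden_ne : ∀ᶠ z in 𝓝[>] 0, √(2 / m z) / (2 * √(lampertiTransform m z)) ≠ 0 := by
    filter_upwards [hgt] with z hz
    have := hpos z hz
    have := lampertiTransform_pos hm hpos hz
    positivity
  have hratio : Tendsto (fun z => deriv m z / (2 * √(m z)) /
      (√(2 / m z) / (2 * √(lampertiTransform m z)))) (𝓝[>] 0) (𝓝 0) := by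
    have hsqrt := (hMS.sqrt.div_const √2)
    rw [Real.sqrt_zero, zero_div] at hsqrt
    refine hsqrt.congr' ?_
    filter_upwards [hgt] with z hz
    have hmz := Real.sqrt_pos.2 (hpos z hz)
    have hfz := Real.sqrt_pos.2 (lampertiTransform_pos hm hpos hz)
    rw [Real.sqrt_mul (sq_nonneg _), Real.sqrt_div zero_le_two, Real.sqrt_sq
      (deriv_nonneg_of_concaveOn_of_nonneg hm (fun x hx => (hpos x hx).le) hz)]
    field_simp
  have hquot := (HasDerivAt.lhopital_zero_nhdsGT hnum hden hden_ne
    (by simpa using hm0.sqrt) (by simpa using (tendsto_lampertiTransform_zero hm hpos).sqrt)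
    hratio).pow 2
  rw [zero_pow two_ne_zero] at hquot
  refine hquot.congr' (hgt.mono fun z hz => ?_)
  rw [div_pow, Real.sq_sqrt (hpos z hz).le, Real.sq_sqrt (lampertiTransform_nonneg m z)]

end Lamperti

/-- The increment `r ↦ m(r + ζ) - m(ζ)` of `m` above the level `ζ`. It is the paper's `m_δ` when
`m(ζ) = δ`. -/
def increment (m : ℝ → ℝ) (ζ r : ℝ) : ℝ := m (r + ζ) - m ζ

section Increment

lemma deriv_increment (m : ℝ → ℝ) (ζ x : ℝ) : deriv (increment m ζ) x = deriv m (x + ζ) := by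
  unfold increment
  rw [deriv_sub_const, deriv_comp_add_const]

variable {m : ℝ → ℝ} {ζ : ℝ}

lemma concaveOn_increment (hm : ConcaveOn ℝ (Ioi 0) m) (hζ : 0 ≤ ζ) :
    ConcaveOn ℝ (Ioi 0) (increment m ζ) :=
  ((hm.translate_left ζ).subset (fun _ hr => add_pos_of_nonneg_of_pos hζ hr) (convex_Ioi 0)).sub
    (convexOn_const _ (convex_Ioi 0))

lemma increment_nonneg (hmono : MonotoneOn m (Ioi 0)) (hζ : 0 < ζ) {x : ℝ} (hx : 0 ≤ x) :
    0 ≤ increment m ζ x :=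
  sub_nonneg.2 (hmono hζ (add_pos_of_nonneg_of_pos hx hζ) (le_add_of_nonneg_left hx))

lemma tendsto_increment (hm0 : Tendsto m (𝓝[>] 0) (𝓝 0)) {x : ℝ} (hx : ContinuousAt m x) :
    Tendsto (fun ζ => increment m ζ x) (𝓝[>] 0) (𝓝 (m x)) := by
  have hadd : Tendsto (fun ζ => x + ζ) (𝓝[>] 0) (𝓝 x) :=
    tendsto_nhdsWithin_of_tendsto_nhds (Continuous.tendsto' (by fun_prop) _ _ (by simp))
  simpa only [increment, sub_zero, Function.comp_apply] using (hx.tendsto.comp hadd).sub hm0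

variable (hm : ConcaveOn ℝ (Ioi 0) m) (hpos : ∀ x, 0 < x → 0 < m x)
include hm hpos

lemma increment_nonneg_of_concaveOn (hζ : 0 < ζ) (x : ℝ) (hx : 0 < x) : 0 ≤ increment m ζ x :=
  increment_nonneg (monotoneOn_Ioi_of_concaveOn_of_nonneg hm fun y hy => (hpos y hy).le) hζ hx.le

lemma tendsto_lampertiTransform_increment (hm0 : Tendsto m (𝓝[>] 0) (𝓝 0)) {z : ℝ} (hz : 0 ≤ z) :
    Tendsto (fun ζ => lampertiTransform (increment m ζ) z) (𝓝[>] 0)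
      (𝓝 (lampertiTransform m z)) := by
  have hgt : ∀ᶠ ζ : ℝ in 𝓝[>] 0, 0 < ζ := self_mem_nhdsWithin
  exact tendsto_lampertiTransform_of_concaveOn (hgt.mono fun ζ hζ => concaveOn_increment hm hζ.le)
    (hgt.mono fun ζ hζ => increment_nonneg_of_concaveOn hm hpos hζ) hpos
    (fun x hx => tendsto_increment hm0
      ((hm.continuousOn isOpen_Ioi).continuousAt (Ioi_mem_nhds hx))) hz

lemma deriv_sq_mul_lampertiTransform_increment_le (hζ : 0 < ζ) {x : ℝ} (hx : 0 ≤ x) :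
    deriv m (x + ζ) ^ 2 * lampertiTransform (increment m ζ) x ≤
      8 * (m (x + ζ) / lampertiTransform m (x + ζ)) := by
  have hm_nonneg : ∀ z, 0 < z → 0 ≤ m z := fun z hz => (hpos z hz).le
  have hy : 0 < x + ζ := add_pos_of_nonneg_of_pos hx hζ
  have hm_y := hpos _ hy
  have hf_y := lampertiTransform_pos hm hpos hy
  have hp : 0 ≤ deriv m (x + ζ) := deriv_nonneg_of_concaveOn_of_nonneg hm hm_nonneg hy
  have hpy : deriv m (x + ζ) * (x + ζ) ≤ m (x + ζ) :=
    deriv_mul_self_le_of_concaveOn_of_nonneg hm hm_nonneg hy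
  have hmf : m (x + ζ) * lampertiTransform m (x + ζ) ^ 2 ≤ 8 * (x + ζ) ^ 2 :=
    mul_lampertiTransform_sq_le hm hm_nonneg hy
  have hpa : deriv m (x + ζ) * lampertiTransform (increment m ζ) x ^ 2 ≤ 8 * (x + ζ) := by
    have := deriv_mul_lampertiTransform_sq_le (concaveOn_increment hm hζ.le)
      (increment_nonneg_of_concaveOn hm hpos hζ) hx
    rw [deriv_increment] at this
    linarith
  generalize x + ζ = y at *
  generalize lampertiTransform (increment m ζ) x = A at *
  set p := deriv m y
  set B := lampertiTransform m y
  rw [← mul_div_assoc, le_div_iff₀ hf_y]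
  refine le_of_sq_le_sq (le_of_mul_le_mul_right ?_ hm_y) (by positivity)
  calc (p ^ 2 * A * B) ^ 2 * m y = p ^ 3 * (p * A ^ 2) * (m y * B ^ 2) := by ring
    _ ≤ p ^ 3 * (8 * y) * (8 * y ^ 2) := by gcongr
    _ = 64 * (p * y) ^ 3 := by ring
    _ ≤ 64 * m y ^ 3 := by gcongr
    _ = (8 * m y) ^ 2 * m y := by ring

end Increment

lemma tendsto_zero_of_tendsto_comp_zero {ι : Type*} {l : Filter ι} {m : ℝ → ℝ} {ζ : ι → ℝ}
    (hmono : MonotoneOn m (Ioi 0)) (hpos : ∀ x, 0 < x → 0 < m x) (hζ : ∀ k, 0 < ζ k)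
    (h : Tendsto (fun k => m (ζ k)) l (𝓝 0)) : Tendsto ζ l (𝓝 0) := by
  refine tendsto_order.2 ⟨fun a ha => .of_forall fun k => ha.trans (hζ k), fun b hb => ?_⟩
  filter_upwards [h.eventually_lt_const (hpos b hb)] with k hk
  exact hmono.reflect_lt (hζ k) hb hk

section Limit

variable {ι : Type*} {l : Filter ι} {m : ℝ → ℝ} (hm : ConcaveOn ℝ (Ioi 0) m)
  (hpos : ∀ z, 0 < z → 0 < m z) (hm0 : Tendsto m (𝓝[>] 0) (𝓝 0))
  {ζ : ι → ℝ} (hζ : ∀ k, 0 < ζ k) (hζ0 : Tendsto ζ l (𝓝 0))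
  {g : ℝ → ℝ} (hg : ∀ w, 0 ≤ w → 0 ≤ g w ∧ lampertiTransform m (g w) = w)
  {gζ : ι → ℝ → ℝ}
  (hgζ : ∀ k, ∀ w, 0 ≤ w → 0 ≤ gζ k w ∧ lampertiTransform (increment m (ζ k)) (gζ k w) = w)
include hm hpos hm0 hζ hζ0 hg hgζ

lemma tendsto_rightInverse_lampertiTransform_increment_add {w : ℝ} (hw : 0 ≤ w) :
    Tendsto (fun q : ι × ℝ => gζ q.1 q.2 + ζ q.1) (l ×ˢ 𝓝[Ici 0] w) (𝓝 (g w)) := by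
  have hζ_gt : Tendsto ζ l (𝓝[>] 0) := tendsto_nhdsWithin_iff.2 ⟨hζ0, .of_forall hζ⟩
  have hgζ_lim : Tendsto (fun q : ι × ℝ => gζ q.1 q.2) (l ×ˢ 𝓝[Ici 0] w) (𝓝 (g w)) :=
    tendsto_rightInverse_of_monotoneOn (strictMonoOn_lampertiTransform hm hpos)
      (fun k => monotoneOn_lampertiTransform (concaveOn_increment hm (hζ k).le)
        (increment_nonneg_of_concaveOn hm hpos (hζ k)))
      (fun _ hz => (tendsto_lampertiTransform_increment hm hpos hm0 hz).comp hζ_gt) hg hgζ hw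
  simpa only [add_zero, Function.comp_apply] using hgζ_lim.add (hζ0.comp tendsto_fst)

lemma tendsto_deriv_mul_sqrt_of_pos (hd : DifferentiableOn ℝ m (Ioi 0)) {w : ℝ} (hw : 0 < w) :
    Tendsto (fun q : ι × ℝ => deriv m (gζ q.1 q.2 + ζ q.1) * √q.2) (l ×ˢ 𝓝[Ici 0] w)
      (𝓝 (deriv m (g w) * √w)) := by
  obtain ⟨hgw_nonneg, hfgw⟩ := hg w hw.le
  have hgw : 0 < g w := hgw_nonneg.lt_of_ne fun h0 => hw.ne <| by
    rw [← hfgw, ← h0, lampertiTransform_zero]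
  have hcont : ContinuousAt (deriv m) (g w) :=
    (continuousOn_deriv_of_concaveOn isOpen_Ioi hm hd).continuousAt (Ioi_mem_nhds hgw)
  exact (hcont.tendsto.comp
    (tendsto_rightInverse_lampertiTransform_increment_add hm hpos hm0 hζ hζ0 hg hgζ hw.le)).mul
      (tendsto_snd.mono_right nhdsWithin_le_nhds).sqrt

lemma tendsto_deriv_mul_sqrt_zero (hd : DifferentiableOn ℝ m (Ioi 0))
    (hMS : Tendsto (fun z => deriv m z ^ 2 * lampertiTransform m z) (𝓝[>] 0) (𝓝 0)) :
    Tendsto (fun q : ι × ℝ => deriv m (gζ q.1 q.2 + ζ q.1) * √q.2) (l ×ˢ 𝓝[Ici 0] 0) (𝓝 0) := by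
  have hw_nonneg : ∀ᶠ q : ι × ℝ in l ×ˢ 𝓝[Ici 0] 0, 0 ≤ q.2 :=
    tendsto_snd.eventually self_mem_nhdsWithin
  have hy_pos : ∀ᶠ q : ι × ℝ in l ×ˢ 𝓝[Ici 0] 0, 0 < gζ q.1 q.2 + ζ q.1 :=
    hw_nonneg.mono fun q hq => add_pos_of_nonneg_of_pos (hgζ q.1 q.2 hq).1 (hζ q.1)
  have hg_zero : g 0 = 0 := by
    obtain ⟨hg0, hfg0⟩ := hg 0 le_rfl
    exact (strictMonoOn_lampertiTransform hm hpos).injOn hg0 self_mem_Ici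
      (hfg0.trans (lampertiTransform_zero m).symm)
  have hsum :=
    tendsto_rightInverse_lampertiTransform_increment_add hm hpos hm0 hζ hζ0 hg hgζ le_rfl
  rw [hg_zero] at hsum
  have hy : Tendsto (fun q : ι × ℝ => gζ q.1 q.2 + ζ q.1) (l ×ˢ 𝓝[Ici 0] 0) (𝓝[>] 0) :=
    tendsto_nhdsWithin_iff.2 ⟨hsum, hy_pos⟩
  have hbound : Tendsto (fun q : ι × ℝ => √(8 * (m (gζ q.1 q.2 + ζ q.1) /
      lampertiTransform m (gζ q.1 q.2 + ζ q.1)))) (l ×ˢ 𝓝[Ici 0] 0) (𝓝 0) := by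
    simpa only [mul_zero, Real.sqrt_zero, Function.comp_apply] using
      (((tendsto_div_lampertiTransform hm hpos hd hm0 hMS).comp hy).const_mul 8).sqrt
  refine squeeze_zero' ?_ ?_ hbound
  · filter_upwards [hy_pos] with q hq
    exact mul_nonneg (deriv_nonneg_of_concaveOn_of_nonneg hm (fun z hz => (hpos z hz).le) hq)
      (Real.sqrt_nonneg _)
  · filter_upwards [hw_nonneg] with q hq
    obtain ⟨hx, hfx⟩ := hgζ q.1 q.2 hq
    have hle := deriv_sq_mul_lampertiTransform_increment_le hm hpos (hζ q.1) hx
    rw [hfx] at hle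
    refine Real.le_sqrt_of_sq_le ?_
    rwa [mul_pow, Real.sq_sqrt hq]

end Limit

theorem G_converges_locally_uniformly_general {ι : Type*} {l : Filter ι} [l.NeBot] {m : ℝ → ℝ}
    (hm_diff : DifferentiableOn ℝ m (Ioi 0)) (hm_pos : ∀ z, 0 < z → 0 < m z)
    (hm_conc : ConcaveOn ℝ (Ioi 0) m) (hm0 : Tendsto m (𝓝[>] 0) (𝓝 0))
    (hMS : Tendsto (fun z => deriv m z ^ 2 * lampertiTransform m z) (𝓝[>] 0) (𝓝 0))
    {ζ : ι → ℝ} (hζ : ∀ k, 0 < ζ k) (hζ0 : Tendsto ζ l (𝓝 0))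
    {g : ℝ → ℝ} (hg : ∀ w, 0 ≤ w → 0 ≤ g w ∧ lampertiTransform m (g w) = w)
    {gζ : ι → ℝ → ℝ}
    (hgζ : ∀ k, ∀ w, 0 ≤ w → 0 ≤ gζ k w ∧ lampertiTransform (increment m (ζ k)) (gζ k w) = w) :
    ContinuousOn (fun w => deriv m (g w) * √w) (Ici 0) ∧
      TendstoLocallyUniformlyOn (fun k w => deriv m (gζ k w + ζ k) * √w)
        (fun w => deriv m (g w) * √w) l (Ici 0) := by
  have hlim : ∀ w ∈ Ici (0 : ℝ),
      Tendsto (fun q : ι × ℝ => deriv m (gζ q.1 q.2 + ζ q.1) * √q.2) (l ×ˢ 𝓝[Ici 0] w)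
        (𝓝 (deriv m (g w) * √w)) := by
    intro w hw
    rcases (mem_Ici.1 hw).eq_or_lt with rfl | hw
    · rw [Real.sqrt_zero, mul_zero]
      exact tendsto_deriv_mul_sqrt_zero hm_conc hm_pos hm0 hζ hζ0 hg hgζ hm_diff hMS
    · exact tendsto_deriv_mul_sqrt_of_pos hm_conc hm_pos hm0 hζ hζ0 hg hgζ hm_diff hw
  have hcont : ContinuousOn (fun w => deriv m (g w) * √w) (Ici 0) :=
    continuousOn_of_forall_tendsto_prod (F := fun k w => deriv m (gζ k w + ζ k) * √w) hlim
  exact ⟨hcont, tendstoLocallyUniformlyOn_of_forall_tendsto_prod hcont hlim⟩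

/-- Local uniform convergence, case `S = ∞`: Let `m` satisfy (M) and
(M-S) (`lim_{z→0⁺} m'(z)² f(z) = 0`), `(δ_k)` a vanishing sequence in `(0,δ̄)` with
`δ̄ < sup m`, `z_{δ_k}` the unique solution of `m(z) = δ_k`,
`m_{δ_k}(z) := m(z + z_{δ_k}) − δ_k` (so `m_{δ_k}'(z) = m'(z + z_{δ_k})`),
`f_{δ_k}(z) := ∫₀^z √(2/m_{δ_k}(r)) dr`, `g_{δ_k} := f_{δ_k}⁻¹`, `g := f⁻¹` and
`G_{δ_k}(w) := m_{δ_k}'(g_{δ_k}(w)) √w`. Then `G(w) := m'(g(w)) √w` (with `G(0) = 0`,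
automatic since `√0 = 0`) is continuous on `[0,∞)` and a subsequence of `(G_{δ_k})`
converges to `G` locally uniformly on `[0,∞)`. -/
theorem G_converges_locally_uniformly
    (m : ℝ → ℝ)
    (hm_c2 : ContDiffOn ℝ 2 m (Ioi 0))
    (hm_pos : ∀ z : ℝ, 0 < z → 0 < m z)
    (hm_conc : ∀ z : ℝ, 0 < z → deriv (deriv m) z ≤ 0)
    (hm0 : Tendsto m (𝓝[>] (0 : ℝ)) (𝓝 0))
    (hMS : Tendsto
      (fun z : ℝ => (deriv m z) ^ 2 * ∫ r in Ioo (0 : ℝ) z, Real.sqrt (2 / m r))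
      (𝓝[>] (0 : ℝ)) (𝓝 0))
    (δbar : ℝ) (hδbar : 0 < δbar)
    (hδbarsup : ∃ z : ℝ, 0 < z ∧ δbar < m z)
    (δ : ℕ → ℝ) (hδmem : ∀ k, δ k ∈ Ioo (0 : ℝ) δbar)
    (hδ0 : Tendsto δ atTop (𝓝 0))
    (zδ : ℕ → ℝ) (hzδ : ∀ k, 0 < zδ k ∧ m (zδ k) = δ k)
    (g : ℝ → ℝ)
    (hg_left : ∀ z : ℝ, 0 ≤ z →
      g (∫ r in Ioo (0 : ℝ) z, Real.sqrt (2 / m r)) = z)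
    (hg_right : ∀ w : ℝ, 0 ≤ w → 0 ≤ g w ∧
      (∫ r in Ioo (0 : ℝ) (g w), Real.sqrt (2 / m r)) = w)
    (gδ : ℕ → ℝ → ℝ)
    (hgδ_left : ∀ k, ∀ z : ℝ, 0 ≤ z →
      gδ k (∫ r in Ioo (0 : ℝ) z, Real.sqrt (2 / (m (r + zδ k) - δ k))) = z)
    (hgδ_right : ∀ k, ∀ w : ℝ, 0 ≤ w → 0 ≤ gδ k w ∧
      (∫ r in Ioo (0 : ℝ) (gδ k w), Real.sqrt (2 / (m (r + zδ k) - δ k))) = w) :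
    ContinuousOn (fun w : ℝ => deriv m (g w) * Real.sqrt w) (Ici 0) ∧
    ∃ φ : ℕ → ℕ, StrictMono φ ∧
      TendstoLocallyUniformlyOn
        (fun k (w : ℝ) => deriv m (gδ (φ k) w + zδ (φ k)) * Real.sqrt w)
        (fun w : ℝ => deriv m (g w) * Real.sqrt w) atTop (Ici 0) := by
  have hconc := concaveOn_of_contDiffOn_of_deriv2_nonpos isOpen_Ioi (convex_Ioi 0) hm_c2 hm_conc
  have hmono := monotoneOn_Ioi_of_concaveOn_of_nonneg hconc fun z hz => (hm_pos z hz).le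
  obtain rfl : δ = fun k => m (zδ k) := funext fun k => (hzδ k).2.symm
  have hz : ∀ k, 0 < zδ k := fun k => (hzδ k).1
  have hz0 := tendsto_zero_of_tendsto_comp_zero hmono hm_pos hz hδ0
  obtain ⟨hcont, hlim⟩ := G_converges_locally_uniformly_general
    (hm_c2.differentiableOn two_ne_zero) hm_pos hconc hm0 hMS hz hz0 hg_right hgδ_right
  exact ⟨hcont, id, strictMono_id, hlim⟩
end
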